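/- arXiv:2211.02394 — 3 statements merged into one kernel-verified Lean document; each statement's English description precedes it below -/
import Mathlib

section
/- Let A and B be states and let a canonical configuration for (A, B) be given. Then there exists a transition path from A to B whose cost equals the cost of the canonical configuration. In particular, the transition distance c(A, B) is at most the cost of any canonical configuration for (A, B). -/
/-!
The blocks can be carried out one after the other, in any order and independently of each other.
A non-mixed block `{p, q}` is a single transition. A mixed block with `p` present, `q` absent and
intermediate point `s` takes two transitions, ordered according to whether `s` is occupied: if `s`
is absent, add `{s, q}` and then remove `{p, s}`; if `s` is present, remove `{p, s}` and then add
`{s, q}`. Either way the cost is `d(p, s) + d(s, q)`, the state changes exactly at `p` and `q`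
(`TPath.mixed`), and the remaining blocks form a canonical configuration for the new state and `B`
(`CanonCfgValid.tail`), so induction on the list of blocks applies. The bound on the infimum
follows because path costs are bounded below by `0`.
-/

variable {X : Type*} [MetricSpace X] [DecidableEq X]

/-- A transition path within ground set `R` from state `A` to state `B`,
recorded by the list of pairs that are added or removed, one per transition. -/
inductive TPath (R : Finset X) : Finset X → Finset X → List (X × X) → Prop
  | nil (A : Finset X) : TPath R A A []
  | add {A B : Finset X} {l : List (X × X)} (p q : X) (hpq : p ≠ q)
      (hp : p ∈ R) (hq : q ∈ R) (hpA : p ∉ A) (hqA : q ∉ A)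
      (h : TPath R (insert p (insert q A)) B l) : TPath R A B ((p, q) :: l)
  | remove {A B : Finset X} {l : List (X × X)} (p q : X) (hpq : p ≠ q)
      (hpA : p ∈ A) (hqA : q ∈ A)
      (h : TPath R (A \ {p, q}) B l) : TPath R A B ((p, q) :: l)

/-- The cost of a transition path: the sum of the distances `d(p, q)` over the
pairs added or removed along the path. -/
noncomputable def pathCost (l : List (X × X)) : ℝ := (l.map fun m => dist m.1 m.2).sum

/-- The transition distance `c(A, B)`: the minimum (infimum) cost of a
transition path from `A` to `B` within ground set `R`. -/
noncomputable def tdist (R A B : Finset X) : ℝ :=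
  sInf {c : ℝ | ∃ l : List (X × X), TPath R A B l ∧ pathCost l = c}

/-- A canonical configuration for `(A, B)` is given by a list of blocks
`(p, q, s?)`.  It is valid if the block endpoints `p, q` enumerate the
symmetric difference `A ∆ B` without repetition (so the blocks partition
`A ∆ B` into two-element blocks), every non-mixed block (both endpoints in
`A \ B` or both in `B \ A`) carries no intermediate point, and every mixed
block (one endpoint in `A \ B`, the other in `B \ A`) carries an intermediate
point `s ∈ R` with `s ∉ {p, q}`. -/
def CanonCfgValid (R A B : Finset X) (blocks : List (X × X × Option X)) : Prop :=
  (blocks.flatMap fun b => [b.1, b.2.1]).Nodup ∧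
  (blocks.flatMap fun b => [b.1, b.2.1]).toFinset = symmDiff A B ∧
  ∀ b ∈ blocks,
    (((b.1 ∈ A \ B ∧ b.2.1 ∈ A \ B) ∨ (b.1 ∈ B \ A ∧ b.2.1 ∈ B \ A)) → b.2.2 = none) ∧
    (((b.1 ∈ A \ B ∧ b.2.1 ∈ B \ A) ∨ (b.1 ∈ B \ A ∧ b.2.1 ∈ A \ B)) →
      ∃ s : X, b.2.2 = some s ∧ s ∈ R ∧ s ≠ b.1 ∧ s ≠ b.2.1)

/-- The cost of a canonical configuration: `d(p, q)` for each non-mixed block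
`(p, q)` and `d(p, s) + d(s, q)` for each mixed block with intermediate point
`s`. -/
noncomputable def cfgCost (blocks : List (X × X × Option X)) : ℝ :=
  (blocks.map fun b =>
    match b.2.2 with
    | none => dist b.1 b.2.1
    | some s => dist b.1 s + dist s b.2.1).sum

lemma pathCost_cons (m : X × X) (l : List (X × X)) :
    pathCost (m :: l) = dist m.1 m.2 + pathCost l := by
  simp [pathCost]

lemma pathCost_nonneg (l : List (X × X)) : 0 ≤ pathCost l := by
  induction l with
  | nil => simp [pathCost]
  | cons m l ih => rw [pathCost_cons]; positivity

/-- A mixed block is realised by two transitions, whose order depends on whether the intermediate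
point `s` is occupied in the current state. -/
lemma TPath.mixed {R A B : Finset X} {l : List (X × X)} {p q s : X}
    (hpA : p ∈ A) (hqA : q ∉ A) (hqR : q ∈ R) (hsR : s ∈ R) (hsp : s ≠ p) (hsq : s ≠ q)
    (h : TPath R (insert q (A.erase p)) B l) :
    ∃ l', TPath R A B l' ∧ pathCost l' = dist p s + dist s q + pathCost l := by
  have hpq : p ≠ q := fun e => hqA (e ▸ hpA)
  by_cases hs : s ∈ A
  · refine ⟨(p, s) :: (s, q) :: l, ?_, by simp only [pathCost_cons]; ring⟩
    refine TPath.remove p s hsp.symm hpA hs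
      (TPath.add s q hsq hsR hqR (by simp) (by simp [hqA]) ?_)
    convert h using 1
    ext x
    simp only [Finset.mem_insert, Finset.mem_sdiff, Finset.mem_erase, Finset.mem_singleton]
    grind
  · refine ⟨(s, q) :: (p, s) :: l, ?_, by simp only [pathCost_cons]; ring⟩
    refine TPath.add s q hsq hsR hqR hs hqA
      (TPath.remove p s hsp.symm (by simp [hpA]) (by simp) ?_)
    convert h using 1
    ext x
    simp only [Finset.mem_insert, Finset.mem_sdiff, Finset.mem_erase, Finset.mem_singleton]
    grind

/-- Once the state `A` has been changed to agree with `B` at the endpoints of the first block, and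
nowhere else, the remaining blocks form a canonical configuration for the new state. -/
lemma CanonCfgValid.tail {R A A' B : Finset X} {b : X × X × Option X}
    {bs : List (X × X × Option X)} (h : CanonCfgValid R A B (b :: bs))
    (h1 : b.1 ∈ A' ↔ b.1 ∈ B) (h2 : b.2.1 ∈ A' ↔ b.2.1 ∈ B)
    (h3 : ∀ x, x ≠ b.1 → x ≠ b.2.1 → (x ∈ A' ↔ x ∈ A)) :
    CanonCfgValid R A' B bs := by
  obtain ⟨hn, hs, hb⟩ := h
  rw [List.flatMap_cons, List.nodup_append] at hn
  obtain ⟨-, hn2, hd⟩ := hn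
  have hne : ∀ x ∈ bs.flatMap (fun b => [b.1, b.2.1]), x ≠ b.1 ∧ x ≠ b.2.1 := fun x hx =>
    ⟨(hd b.1 (by simp) x hx).symm, (hd b.2.1 (by simp) x hx).symm⟩
  refine ⟨hn2, ?_, fun c hc => ?_⟩
  · ext x
    have hx := Finset.ext_iff.mp hs x
    rw [List.flatMap_cons, List.mem_toFinset, List.mem_append, Finset.mem_symmDiff] at hx
    rw [List.mem_toFinset, Finset.mem_symmDiff]
    have hh := hne x
    have h3x := h3 x
    simp only [List.mem_cons, List.not_mem_nil, or_false] at hx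
    grind
  · have hc1 := hne c.1 (List.mem_flatMap.mpr ⟨c, hc, by simp⟩)
    have hc2 := hne c.2.1 (List.mem_flatMap.mpr ⟨c, hc, by simp⟩)
    have := hb c (List.mem_cons_of_mem _ hc)
    simpa only [Finset.mem_sdiff, h3 _ hc1.1 hc1.2, h3 _ hc2.1 hc2.2] using this

lemma CanonCfgValid.exists_path {R B : Finset X} (hBR : B ⊆ R)
    (blocks : List (X × X × Option X)) :
    ∀ A, CanonCfgValid R A B blocks → ∃ l, TPath R A B l ∧ pathCost l = cfgCost blocks := by
  induction blocks with
  | nil =>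
    intro A h
    have : A = B := by
      have := h.2.1
      simpa [eq_comm, ← Finset.bot_eq_empty] using this
    exact ⟨[], this ▸ TPath.nil A, by simp [pathCost, cfgCost]⟩
  | cons b bs ih =>
    obtain ⟨p, q, o⟩ := b
    intro A h
    have hpq : p ≠ q := by
      have := h.1
      simp only [List.flatMap_cons, List.cons_append, List.nil_append, List.nodup_cons,
        List.mem_cons] at this
      grind
    have hp : p ∈ symmDiff A B := by rw [← h.2.1]; simp
    have hq : q ∈ symmDiff A B := by rw [← h.2.1]; simp
    have hb := h.2.2 (p, q, o) (by simp)
    simp only [Finset.mem_sdiff] at hb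
    obtain ⟨hb1, hb2⟩ := hb
    rw [Finset.mem_symmDiff] at hp hq
    rcases hp with hp | hp <;> rcases hq with hq | hq
    · obtain rfl := hb1 (.inl ⟨hp, hq⟩)
      obtain ⟨l, hl, hc⟩ := ih (A \ {p, q}) (h.tail (by simp [hp]) (by simp [hq])
        (fun x h1 h2 => by simp_all))
      refine ⟨(p, q) :: l, TPath.remove p q hpq hp.1 hq.1 hl, ?_⟩
      simp [pathCost_cons, hc, cfgCost]
    · obtain ⟨s, rfl, hsR, hsp, hsq⟩ := hb2 (.inl ⟨hp, hq⟩)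
      obtain ⟨l, hl, hc⟩ := ih (insert q (A.erase p)) (h.tail (by simp [hp, hpq])
        (by simp [hq]) (fun x h1 h2 => by simp_all))
      obtain ⟨l', hl', hc'⟩ := hl.mixed hp.1 hq.2 (hBR hq.1) hsR hsp hsq
      refine ⟨l', hl', ?_⟩
      simp [hc', hc, cfgCost]
    · obtain ⟨s, rfl, hsR, hsp, hsq⟩ := hb2 (.inr ⟨hp, hq⟩)
      obtain ⟨l, hl, hc⟩ := ih (insert p (A.erase q)) (h.tail (by simp [hp])
        (by simp [hq, hpq.symm]) (fun x h1 h2 => by simp_all))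
      obtain ⟨l', hl', hc'⟩ := hl.mixed hq.1 hp.2 (hBR hp.1) hsR hsq hsp
      refine ⟨l', hl', ?_⟩
      simp [hc', hc, cfgCost, dist_comm, add_comm]
    · obtain rfl := hb1 (.inr ⟨hp, hq⟩)
      obtain ⟨l, hl, hc⟩ := ih (insert p (insert q A)) (h.tail (by simp [hp]) (by simp [hq])
        (fun x h1 h2 => by simp_all))
      refine ⟨(p, q) :: l, TPath.add p q hpq (hBR hp.1) (hBR hq.1) hp.2 hq.2 hl, ?_⟩
      simp [pathCost_cons, hc, cfgCost]

/-- **Canonical difference graphs are realisable.** Let `A` and `B` be states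
(even subsets of the finite ground set `R`) and let a canonical configuration
for `(A, B)` be given. Then there exists a transition path from `A` to `B`
whose cost equals the cost of the canonical configuration; in particular the
transition distance `c(A, B)` is at most the cost of the configuration. -/
theorem canonical_realisable (R A B : Finset X)
    (hAR : A ⊆ R) (hBR : B ⊆ R) (hA : Even A.card) (hB : Even B.card)
    (blocks : List (X × X × Option X)) (hcfg : CanonCfgValid R A B blocks) :
    (∃ l : List (X × X), TPath R A B l ∧ pathCost l = cfgCost blocks) ∧
      tdist R A B ≤ cfgCost blocks := by
  have hpath := CanonCfgValid.exists_path hBR blocks A hcfg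
  refine ⟨hpath, csInf_le ⟨0, ?_⟩ hpath⟩
  rintro c ⟨l, -, rfl⟩
  exact pathCost_nonneg l
end

section
/- Let A and B be states and let P be any transition path from A to B. Then there exists a canonical configuration for (A, B) whose cost is at most the cost of P. Consequently, the transition distance c(A, B) equals the minimum cost of a canonical configuration for (A, B), and there exists a shortest transition path between A and B whose difference graph is canonical. -/
/-!
Every point of `A ∆ B` is coloured by its membership in `B`: a block is mixed exactly when its
endpoints have different colours. The colouring does not change while a path from `A` to `B` is
followed, and a transition `(p, q)` replaces `A ∆ B` by its symmetric difference with `{p, q}`.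
Since `p` and `q` are both inside or both outside the current state, they agree in membership in
`A ∆ B` if and only if they have the same colour.

*From paths to configurations* (`Matchable.step`). By induction along the path, a configuration
for the next state is turned into one for the current state at an additional cost of at most
`d(p, q)`: the blocks that contain `p` or `q` are merged along the edge `(p, q)`, or `{p, q}`
becomes a block or disappears. A merged block costs at most the sum of its parts by the triangle
inequality, and when it is mixed, `p` or `q` lies on the merged walk and differs from both of its
endpoints, so it can serve as the intermediate point.

*From configurations to paths* (`IsCfg.exists_path`). The blocks can be realised one after the
other. A non-mixed block is a single transition. For a mixed block `{p, q}` with intermediate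
point `s`, exactly one of `p`, `q` agrees with `s` in membership in the current state; that point
is toggled together with `s` first, the other one second.

For fixed `A`, `B`, `R` there are finitely many configurations, so a cheapest one exists, and the
two translations show that its cost is the transition distance.
-/

variable {X : Type*} [MetricSpace X] [DecidableEq X]

/-- The edges of a canonical configuration: one edge `(p, q)` per non-mixed
block and two edges `(p, s)`, `(s, q)` per mixed block, as unordered pairs. -/
def cfgEdges (blocks : List (X × X × Option X)) : List (Sym2 X) :=
  blocks.flatMap fun b =>
    match b.2.2 with
    | none => [s(b.1, b.2.1)]
    | some s => [s(b.1, s), s(s, b.2.1)]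

/-! ### Configurations as coloured pairings -/

/-- The pair `(p, q)` with optional intermediate point `o` is an admissible block, where the
colour of a point is its membership in `B`. -/
def IsBlock (R B : Finset X) (p q : X) (o : Option X) : Prop :=
  ((p ∈ B ↔ q ∈ B) → o = none) ∧
  (¬(p ∈ B ↔ q ∈ B) → ∃ s : X, o = some s ∧ s ∈ R ∧ s ≠ p ∧ s ≠ q)

/-- The list of blocks is a canonical configuration on the point set `D`, where the colour of a
point is its membership in `B`. For `D = A ∆ B` this is `CanonCfgValid`, see `isCfg_iff`. -/
inductive IsCfg (R B : Finset X) : Finset X → List (X × X × Option X) → Prop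
  | nil : IsCfg R B ∅ []
  | cons {D : Finset X} {bs : List (X × X × Option X)} (p q : X) (o : Option X) (hpq : p ≠ q)
      (hp : p ∉ D) (hq : q ∉ D) (hb : IsBlock R B p q o) (h : IsCfg R B D bs) :
      IsCfg R B (insert p (insert q D)) ((p, q, o) :: bs)

lemma isCfg_of_coloured (R B : Finset X) (bs : List (X × X × Option X))
    (hn : (bs.flatMap fun b => [b.1, b.2.1]).Nodup)
    (hb : ∀ b ∈ bs, IsBlock R B b.1 b.2.1 b.2.2) :
    IsCfg R B (bs.flatMap fun b => [b.1, b.2.1]).toFinset bs := by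
  induction bs with
  | nil => exact IsCfg.nil
  | cons b bs ih =>
    obtain ⟨p, q, o⟩ := b
    simp only [List.flatMap_cons, List.cons_append, List.nil_append, List.nodup_cons,
      List.mem_cons, not_or] at hn
    obtain ⟨⟨hpq, hp⟩, hq, hn⟩ := hn
    have h := IsCfg.cons (R := R) (B := B) p q o hpq (by simpa using hp) (by simpa using hq)
      (hb _ List.mem_cons_self) (ih hn fun b hb' => hb b (List.mem_cons_of_mem _ hb'))
    simpa using h

lemma IsCfg.coloured {R B D : Finset X} {bs : List (X × X × Option X)} (h : IsCfg R B D bs) :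
    (bs.flatMap fun b => [b.1, b.2.1]).Nodup ∧
    (bs.flatMap fun b => [b.1, b.2.1]).toFinset = D ∧
    ∀ b ∈ bs, IsBlock R B b.1 b.2.1 b.2.2 := by
  induction h with
  | nil => simp
  | @cons D bs p q o hpq hp hq hb h ih =>
    obtain ⟨h1, h2, h3⟩ := ih
    rw [← h2] at hp hq
    rw [List.mem_toFinset] at hp hq
    refine ⟨?_, ?_, ?_⟩
    · simp only [List.flatMap_cons, List.cons_append, List.nil_append, List.nodup_cons,
        List.mem_cons, not_or]
      exact ⟨⟨hpq, hp⟩, hq, h1⟩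
    · simp only [List.flatMap_cons, List.cons_append, List.nil_append, List.toFinset_cons, h2]
    · intro b hb'
      rcases List.mem_cons.1 hb' with rfl | hb'
      · exact hb
      · exact h3 b hb'

lemma isCfg_iff {R A B : Finset X} {bs : List (X × X × Option X)} :
    CanonCfgValid R A B bs ↔ IsCfg R B (symmDiff A B) bs := by
  have key : (bs.flatMap fun b => [b.1, b.2.1]).toFinset = symmDiff A B → ∀ b ∈ bs,
      ((((b.1 ∈ A \ B ∧ b.2.1 ∈ A \ B) ∨ (b.1 ∈ B \ A ∧ b.2.1 ∈ B \ A)) → b.2.2 = none) ∧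
      (((b.1 ∈ A \ B ∧ b.2.1 ∈ B \ A) ∨ (b.1 ∈ B \ A ∧ b.2.1 ∈ A \ B)) →
        ∃ s : X, b.2.2 = some s ∧ s ∈ R ∧ s ≠ b.1 ∧ s ≠ b.2.1) ↔
      IsBlock R B b.1 b.2.1 b.2.2) := by
    intro hD b hb
    have h1 : b.1 ∈ symmDiff A B := by
      rw [← hD, List.mem_toFinset, List.mem_flatMap]; exact ⟨b, hb, by simp⟩
    have h2 : b.2.1 ∈ symmDiff A B := by
      rw [← hD, List.mem_toFinset, List.mem_flatMap]; exact ⟨b, hb, by simp⟩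
    rw [Finset.mem_symmDiff] at h1 h2
    unfold IsBlock
    apply and_congr <;> apply imp_congr_left <;> simp only [Finset.mem_sdiff] <;> tauto
  constructor
  · rintro ⟨hn, hD, hb⟩
    rw [← hD]
    exact isCfg_of_coloured R B bs hn fun b hb' => (key hD b hb').1 (hb b hb')
  · intro h
    obtain ⟨hn, hD, hb⟩ := h.coloured
    exact ⟨hn, hD, fun b hb' => (key hD b hb').2 (hb b hb')⟩

/-! ### From paths to configurations -/

/-- `p` and `q` can be joined by an admissible block of cost at most `c`. -/
def BlockLE (R B : Finset X) (p q : X) (c : ℝ) : Prop :=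
  ((p ∈ B ↔ q ∈ B) ∧ dist p q ≤ c) ∨
  (¬(p ∈ B ↔ q ∈ B) ∧ ∃ s ∈ R, s ≠ p ∧ s ≠ q ∧ dist p s + dist s q ≤ c)

lemma BlockLE.symm {R B : Finset X} {p q : X} {c : ℝ} (h : BlockLE R B p q c) :
    BlockLE R B q p c := by
  rcases h with ⟨h, hc⟩ | ⟨h, s, hs, h1, h2, hc⟩
  · exact Or.inl ⟨h.symm, by rwa [dist_comm]⟩
  · exact Or.inr ⟨fun h' => h h'.symm, s, hs, h2, h1, by
      rw [dist_comm q s, dist_comm s p]; linarith⟩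

lemma BlockLE.dist_le {R B : Finset X} {p q : X} {c : ℝ} (h : BlockLE R B p q c) :
    dist p q ≤ c := by
  rcases h with ⟨_, hc⟩ | ⟨_, s, _, _, _, hc⟩
  · exact hc
  · exact (dist_triangle _ _ _).trans hc

/-- Prolonging a block `{p, x}` by an edge `(p, q)`. If `q` and `x` have different colours, `p` is
a suitable intermediate point. -/
lemma BlockLE.extend {R B : Finset X} {p q x : X} {c : ℝ} (h : BlockLE R B p x c) (hp : p ∈ R)
    (hpq : p ≠ q) (hpx : p ≠ x) : BlockLE R B q x (c + dist p q) := by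
  have hd := h.dist_le
  by_cases hqx : q ∈ B ↔ x ∈ B
  · refine Or.inl ⟨hqx, ?_⟩
    linarith [dist_triangle q p x, dist_comm p q]
  · exact Or.inr ⟨hqx, p, hp, hpq, hpx, by linarith [dist_comm p q]⟩

/-- Merging two blocks `{p, x}` and `{q, y}` along an edge `(p, q)` with ends of equal colour. If
`x` and `y` have different colours, then one of the two blocks, say `{p, x}`, is non-mixed, and
`p` is an intermediate point: it differs from `y` because its colour does. -/
lemma BlockLE.merge {R B : Finset X} {p q x y : X} {c c' : ℝ} (h : BlockLE R B p x c)
    (h' : BlockLE R B q y c') (hp : p ∈ R) (hq : q ∈ R) (hpx : p ≠ x) (hqy : q ≠ y)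
    (hcol : p ∈ B ↔ q ∈ B) : BlockLE R B x y (c + c' + dist p q) := by
  have hd := h.dist_le
  have hd' := h'.dist_le
  have t1 := dist_triangle4 x p q y
  have e1 := dist_comm x p
  by_cases hxy : x ∈ B ↔ y ∈ B
  · exact Or.inl ⟨hxy, by linarith⟩
  · refine Or.inr ⟨hxy, ?_⟩
    by_cases hpy : p ∈ B ↔ y ∈ B
    · refine ⟨q, hq, ?_, hqy, ?_⟩
      · rintro rfl; tauto
      · linarith [dist_triangle x p q]
    · refine ⟨p, hp, hpx, ?_, ?_⟩
      · rintro rfl; tauto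
      · linarith [dist_triangle p q y]

/-- The point set `D` carries a canonical configuration of cost at most `c`. -/
def Matchable (R B D : Finset X) (c : ℝ) : Prop :=
  ∃ bs, IsCfg R B D bs ∧ cfgCost bs ≤ c

lemma Matchable.insert {R B D : Finset X} {p q : X} {c c' : ℝ} (h : Matchable R B D c)
    (hb : BlockLE R B p q c') (hpq : p ≠ q) (hp : p ∉ D) (hq : q ∉ D) :
    Matchable R B (insert p (insert q D)) (c + c') := by
  obtain ⟨bs, hbs, hc⟩ := h
  rcases hb with ⟨h, hc'⟩ | ⟨h, s, hs, h1, h2, hc'⟩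
  · refine ⟨_, IsCfg.cons p q none hpq hp hq ⟨fun _ => rfl, fun h' => absurd h h'⟩ hbs, ?_⟩
    simp only [cfgCost, List.map_cons, List.sum_cons] at hc ⊢
    linarith
  · refine ⟨_, IsCfg.cons p q (some s) hpq hp hq
      ⟨fun h' => absurd h' h, fun _ => ⟨s, rfl, hs, h1, h2⟩⟩ hbs, ?_⟩
    simp only [cfgCost, List.map_cons, List.sum_cons] at hc ⊢
    linarith

/-- The block of a given point can be split off from a configuration. -/
lemma IsCfg.extract {R B D : Finset X} {bs : List (X × X × Option X)} (h : IsCfg R B D bs) {p : X}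
    (hp : p ∈ D) : ∃ x ∈ D, p ≠ x ∧ ∃ c c' : ℝ, BlockLE R B p x c' ∧
      Matchable R B (D \ {p, x}) c ∧ c + c' ≤ cfgCost bs := by
  induction h with
  | nil => simp at hp
  | @cons D bs a b o hab ha hb hbl h ih =>
    obtain ⟨c₁, hc₁, hcost⟩ : ∃ c₁, BlockLE R B a b c₁ ∧
        cfgCost ((a, b, o) :: bs) = cfgCost bs + c₁ := by
      by_cases hcol : a ∈ B ↔ b ∈ B
      · obtain rfl := hbl.1 hcol
        refine ⟨dist a b, Or.inl ⟨hcol, le_rfl⟩, ?_⟩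
        simp only [cfgCost, List.map_cons, List.sum_cons]
        ring
      · obtain ⟨s, rfl, hs, h1, h2⟩ := hbl.2 hcol
        refine ⟨dist a s + dist s b, Or.inr ⟨hcol, s, hs, h1, h2, le_rfl⟩, ?_⟩
        simp only [cfgCost, List.map_cons, List.sum_cons]
        ring
    by_cases hpa : p = a
    · subst hpa
      refine ⟨b, by simp, hab, cfgCost bs, c₁, hc₁, ?_, hcost.ge⟩
      have : insert p (insert b D) \ {p, b} = D := by grind
      rw [this]
      exact ⟨bs, h, le_rfl⟩
    by_cases hpb : p = b
    · subst hpb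
      refine ⟨a, by simp, hpa, cfgCost bs, c₁, hc₁.symm, ?_, hcost.ge⟩
      have : insert a (insert p D) \ {p, a} = D := by grind
      rw [this]
      exact ⟨bs, h, le_rfl⟩
    have hpD : p ∈ D := by grind
    obtain ⟨x, hx, hpx, c, c', hbx, hm, hle⟩ := ih hpD
    refine ⟨x, by simp [hx], hpx, c + c₁, c', hbx, ?_, by linarith⟩
    have : insert a (insert b D) \ {p, x} = insert a (insert b (D \ {p, x})) := by grind
    rw [this]
    exact hm.insert hc₁ hab (by grind) (by grind)

lemma Matchable.extract {R B D : Finset X} {d : ℝ} (h : Matchable R B D d) {p : X}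
    (hp : p ∈ D) : ∃ x ∈ D, p ≠ x ∧ ∃ c c' : ℝ, BlockLE R B p x c' ∧
      Matchable R B (D \ {p, x}) c ∧ c + c' ≤ d := by
  obtain ⟨bs, hbs, hd⟩ := h
  obtain ⟨x, hx, hpx, c, c', h1, h2, h3⟩ := hbs.extract hp
  exact ⟨x, hx, hpx, c, c', h1, h2, h3.trans hd⟩

lemma Matchable.mono {R B D : Finset X} {c c' : ℝ} (h : Matchable R B D c) (hc : c ≤ c') :
    Matchable R B D c' := by
  obtain ⟨bs, hbs, h⟩ := h
  exact ⟨bs, hbs, h.trans hc⟩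

/-- The case of `Matchable.step` in which the block of `p` is passed on to `q`. -/
lemma Matchable.step_one {R B D : Finset X} {d : ℝ} {p q : X} (h : Matchable R B D d)
    (hp : p ∈ R) (hpq : p ≠ q) (hpD : p ∈ D) (hqD : q ∉ D) :
    Matchable R B (symmDiff D {p, q}) (d + dist p q) := by
  obtain ⟨x, hx, hpx, c, c', hb, hm, hle⟩ := h.extract hpD
  have hD : symmDiff D {p, q} = Insert.insert q (Insert.insert x (D \ {p, x})) := by
    ext z; simp only [Finset.mem_symmDiff]; grind
  rw [hD]
  exact (hm.insert (hb.extend hp hpq hpx) (by grind) (by grind) (by grind)).mono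
    (by linarith)

/-- Undoing one transition `(p, q)` costs at most `d(p, q)`. The hypothesis `hcol` says that `p`
and `q` agree in membership in the state, which is the set `D ∆ B`. -/
lemma Matchable.step {R B D : Finset X} {d : ℝ} {p q : X} (h : Matchable R B D d)
    (hp : p ∈ R) (hq : q ∈ R) (hpq : p ≠ q) (hcol : (p ∈ D ↔ q ∈ D) ↔ (p ∈ B ↔ q ∈ B)) :
    Matchable R B (symmDiff D {p, q}) (d + dist p q) := by
  by_cases hpD : p ∈ D <;> by_cases hqD : q ∈ D
  · have hc : p ∈ B ↔ q ∈ B := hcol.1 (by tauto)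
    obtain ⟨x, hx, hpx, c, c', hb, hm, hle⟩ := h.extract hpD
    by_cases hqx : q = x
    · subst hqx
      have hD : symmDiff D {p, q} = D \ {p, q} := by
        ext z; simp only [Finset.mem_symmDiff]; grind
      rw [hD]
      exact hm.mono (by linarith [hb.dist_le, dist_nonneg (x := p) (y := q)])
    · obtain ⟨y, hy, hqy, e, e', hb', hm', hle'⟩ := hm.extract (p := q) (by grind)
      have hD : symmDiff D {p, q} =
          Insert.insert x (Insert.insert y ((D \ {p, x}) \ {q, y})) := by
        ext z; simp only [Finset.mem_symmDiff]; grind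
      rw [hD]
      exact (hm'.insert (hb.merge hb' hp hq hpx hqy hc) (by grind) (by grind)
        (by grind)).mono (by linarith)
  · exact h.step_one hp hpq hpD hqD
  · have := h.step_one hq hpq.symm hqD hpD
    rwa [Finset.pair_comm, dist_comm] at this
  · have hD : symmDiff D {p, q} = Insert.insert p (Insert.insert q D) := by
      ext z; simp only [Finset.mem_symmDiff]; grind
    rw [hD]
    exact h.insert (Or.inl ⟨hcol.1 (by tauto), le_rfl⟩) hpq hpD hqD

lemma TPath.matchable {R A B : Finset X} {l : List (X × X)} (h : TPath R A B l) (hA : A ⊆ R) :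
    Matchable R B (symmDiff A B) (pathCost l) := by
  induction h with
  | nil A =>
    rw [symmDiff_self]
    exact ⟨[], IsCfg.nil, by simp [cfgCost, pathCost]⟩
  | @add A B l p q hpq hp hq hpA hqA h ih =>
    have h1 := (ih (by grind)).step hp hq hpq (by simp only [Finset.mem_symmDiff]; grind)
    have hD : symmDiff (symmDiff (Insert.insert p (Insert.insert q A)) B) {p, q}
        = symmDiff A B := by
      ext z; simp only [Finset.mem_symmDiff]; grind
    rw [hD] at h1
    refine h1.mono (le_of_eq ?_)
    simp only [pathCost, List.map_cons, List.sum_cons]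
    ring
  | @remove A B l p q hpq hpA hqA h ih =>
    have h1 := (ih (by grind)).step (hA hpA) (hA hqA) hpq
      (by simp only [Finset.mem_symmDiff]; grind)
    have hD : symmDiff (symmDiff (A \ {p, q}) B) {p, q} = symmDiff A B := by
      ext z; simp only [Finset.mem_symmDiff]; grind
    rw [hD] at h1
    refine h1.mono (le_of_eq ?_)
    simp only [pathCost, List.map_cons, List.sum_cons]
    ring

/-! ### From configurations to paths -/

/-- Additions and removals are uniformly the toggling of two points that agree in membership. -/
lemma TPath.toggle {R A B : Finset X} {l : List (X × X)} {p q : X} (hpq : p ≠ q) (hp : p ∈ R)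
    (hq : q ∈ R) (hA : p ∈ A ↔ q ∈ A) (h : TPath R (symmDiff A {p, q}) B l) :
    TPath R A B ((p, q) :: l) := by
  by_cases hpA : p ∈ A
  · refine TPath.remove p q hpq hpA (hA.1 hpA) ?_
    convert h using 1
    ext z; simp only [Finset.mem_symmDiff]; grind
  · refine TPath.add p q hpq hp hq hpA (fun h' => hpA (hA.2 h')) ?_
    convert h using 1
    ext z; simp only [Finset.mem_symmDiff]; grind

/-- Toggling `p` and `q`, exactly one of which belongs to the state, through an intermediate point
`s` that agrees with `p`. -/
lemma TPath.toggle_via {R A B : Finset X} {l : List (X × X)} {p q s : X}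
    (h : TPath R (symmDiff A {p, q}) B l) (hp : p ∈ R) (hq : q ∈ R) (hs : s ∈ R) (hsp : s ≠ p)
    (hsq : s ≠ q) (hpq : p ≠ q) (hps : p ∈ A ↔ s ∈ A) (hA : p ∈ A ↔ q ∉ A) :
    TPath R A B ((p, s) :: (s, q) :: l) := by
  have h1 : symmDiff ({p, s} : Finset X) {s, q} = {p, q} := by
    ext z; simp only [Finset.mem_symmDiff]; grind
  refine TPath.toggle hsp.symm hp hs hps (TPath.toggle hsq hs hq ?_ ?_)
  · simp only [Finset.mem_symmDiff, Finset.mem_insert, Finset.mem_singleton]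
    simp only [hsq.symm, hpq.symm, or_true, or_false, not_true, not_false_eq_true, and_true,
      and_false, true_and, false_and, false_or]
    tauto
  · rwa [symmDiff_assoc, h1]

lemma IsCfg.exists_path {R B D : Finset X} {bs : List (X × X × Option X)} (h : IsCfg R B D bs)
    (hD : D ⊆ R) : ∀ A : Finset X, symmDiff A B = D →
      ∃ l, TPath R A B l ∧ (l.map fun m => s(m.1, m.2)).Perm (cfgEdges bs) := by
  induction h with
  | nil =>
    intro A hA
    have : A = B := symmDiff_eq_bot.1 hA
    subst this
    exact ⟨[], TPath.nil A, by simp [cfgEdges]⟩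
  | @cons D bs p q o hpq hp hq hb h ih =>
    intro A hA
    have hpR : p ∈ R := hD (by simp)
    have hqR : q ∈ R := hD (by simp)
    have hmem : ∀ z, (z ∈ A ∧ z ∉ B ∨ z ∈ B ∧ z ∉ A) ↔ z = p ∨ z = q ∨ z ∈ D := by
      intro z
      rw [← Finset.mem_symmDiff, hA]
      simp
    obtain ⟨l, hl, hperm⟩ := ih (fun z hz => hD (by simp [hz])) (symmDiff A {p, q}) (by
      ext z
      have := hmem z
      simp only [Finset.mem_symmDiff]
      grind)
    have hpm : p ∈ A ↔ p ∉ B := by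
      have := hmem p
      simp only [true_or, iff_true] at this
      clear hb hmem
      tauto
    have hqm : q ∈ A ↔ q ∉ B := by
      have := hmem q
      simp only [true_or, or_true, iff_true] at this
      clear hb hmem
      tauto
    by_cases hcol : p ∈ B ↔ q ∈ B
    · obtain rfl := hb.1 hcol
      refine ⟨(p, q) :: l, hl.toggle hpq hpR hqR (by rw [hpm, hqm, hcol]), ?_⟩
      simpa [cfgEdges] using hperm
    · obtain ⟨s, rfl, hs, hsp, hsq⟩ := hb.2 hcol
      have hpA : p ∈ A ↔ q ∉ A := by
        rw [hpm, hqm]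
        clear hb hmem ih hperm
        tauto
      clear hmem hb hpm hqm hcol
      by_cases hsA : p ∈ A ↔ s ∈ A
      · refine ⟨(p, s) :: (s, q) :: l, ?_, by simpa [cfgEdges] using hperm⟩
        exact hl.toggle_via hpR hqR hs hsp hsq hpq hsA hpA
      · refine ⟨(q, s) :: (s, p) :: l, ?_, ?_⟩
        · rw [Finset.pair_comm] at hl
          exact hl.toggle_via hqR hpR hs hsq hsp hpq.symm (by tauto) (by tauto)
        · have h2 : (s(s, q) :: s(p, s) :: l.map fun m => s(m.1, m.2)).Perm
              (s(p, s) :: s(s, q) :: cfgEdges bs) :=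
            (List.Perm.swap _ _ _).trans ((hperm.cons _).cons _)
          simpa [cfgEdges, Sym2.eq_swap (a := q), Sym2.eq_swap (a := s) (b := p)] using h2

/-- The length of an unordered pair. -/
noncomputable def edgeCost : Sym2 X → ℝ :=
  Sym2.lift ⟨fun p q => dist p q, fun p q => dist_comm p q⟩

lemma cfgCost_eq_edges (bs : List (X × X × Option X)) :
    cfgCost bs = ((cfgEdges bs).map edgeCost).sum := by
  induction bs with
  | nil => simp [cfgCost, cfgEdges]
  | cons b bs ih =>
    obtain ⟨p, q, o⟩ := b
    cases o <;> simp_all [cfgCost, cfgEdges, edgeCost]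
    ring

lemma pathCost_eq_cfgCost {l : List (X × X)} {bs : List (X × X × Option X)}
    (h : (l.map fun m => s(m.1, m.2)).Perm (cfgEdges bs)) : pathCost l = cfgCost bs := by
  rw [cfgCost_eq_edges, ← (h.map edgeCost).sum_eq, List.map_map]
  rfl

/-! ### Existence of a cheapest configuration -/

lemma finite_isCfg {R B D : Finset X} (hD : D ⊆ R) : {bs | IsCfg R B D bs}.Finite := by
  -- all blocks are taken from this finite set
  let S : Finset (X × X × Option X) := R ×ˢ R ×ˢ Finset.insertNone R
  refine ((List.finite_length_le S D.card).image (List.map Subtype.val)).subset ?_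
  intro bs hbs
  have key : (∀ b ∈ bs, b ∈ S) ∧ bs.length ≤ D.card := by
    change IsCfg R B D bs at hbs
    induction hbs with
    | nil => simp
    | @cons D bs p q o hpq hp hq hb h ih =>
      obtain ⟨h1, h2⟩ := ih (fun z hz => hD (by simp [hz]))
      refine ⟨?_, ?_⟩
      · intro b hb'
        rcases List.mem_cons.1 hb' with rfl | hb'
        · have hpR : p ∈ R := hD (by simp)
          have hqR : q ∈ R := hD (by simp)
          by_cases hcol : p ∈ B ↔ q ∈ B
          · obtain rfl := hb.1 hcol
            simp [S, hpR, hqR]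
          · obtain ⟨s, rfl, hs, -, -⟩ := hb.2 hcol
            simp [S, hpR, hqR, hs]
        · exact h1 b hb'
      · rw [Finset.card_insert_of_notMem (by simp [hpq, hp]), Finset.card_insert_of_notMem hq,
          List.length_cons]
        omega
  refine ⟨bs.attachWith (· ∈ S) key.1, ?_, ?_⟩
  · simpa using key.2
  · exact List.attachWith_map_subtype_val key.1

/-! ### The transition distance -/

/-- **Shortest transition paths can be taken canonical.** Let `A` and `B` be
states (even subsets of the finite ground set `R`).  For every transition path
`P` from `A` to `B` there is a canonical configuration for `(A, B)` whose cost
is at most the cost of `P`.  Consequently the transition distance `c(A, B)`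
equals the minimum cost of a canonical configuration for `(A, B)`, and there
exists a shortest transition path between `A` and `B` whose difference graph
(the multiset of pairs added or removed along the path) is canonical, i.e.
coincides with the edges of a canonical configuration. -/
theorem canonical_shortest_path (R A B : Finset X)
    (hAR : A ⊆ R) (hBR : B ⊆ R) (hA : Even A.card) (hB : Even B.card)
    {l : List (X × X)} (hP : TPath R A B l) :
    (∃ blocks : List (X × X × Option X),
        CanonCfgValid R A B blocks ∧ cfgCost blocks ≤ pathCost l) ∧
    (∃ blocks : List (X × X × Option X),
        CanonCfgValid R A B blocks ∧ cfgCost blocks = tdist R A B) ∧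
    (∀ blocks : List (X × X × Option X),
        CanonCfgValid R A B blocks → tdist R A B ≤ cfgCost blocks) ∧
    (∃ (l' : List (X × X)) (blocks : List (X × X × Option X)),
        TPath R A B l' ∧ pathCost l' = tdist R A B ∧
        CanonCfgValid R A B blocks ∧
        (l'.map fun m => s(m.1, m.2)).Perm (cfgEdges blocks)) := by
  have hD : symmDiff A B ⊆ R := by
    intro z hz
    rw [Finset.mem_symmDiff] at hz
    rcases hz with ⟨h, -⟩ | ⟨h, -⟩
    · exact hAR h
    · exact hBR h
  have hcfg : ∀ l, TPath R A B l → ∃ bs, CanonCfgValid R A B bs ∧ cfgCost bs ≤ pathCost l := by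
    intro l hl
    obtain ⟨bs, hbs, hc⟩ := hl.matchable hAR
    exact ⟨bs, isCfg_iff.2 hbs, hc⟩
  obtain ⟨bs₀, hbs₀, hc₀⟩ := hcfg l hP
  have hfin : {bs | CanonCfgValid R A B bs}.Finite := by
    simpa only [isCfg_iff] using finite_isCfg hD
  obtain ⟨m, hm, hmin⟩ := Set.exists_min_image _ cfgCost hfin ⟨bs₀, hbs₀⟩
  obtain ⟨l', hl', hperm⟩ := (isCfg_iff.1 hm).exists_path hD A rfl
  have hcost := pathCost_eq_cfgCost hperm
  have hdist : tdist R A B = cfgCost m := by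
    refine IsLeast.csInf_eq ⟨⟨l', hl', hcost⟩, ?_⟩
    rintro c ⟨l₁, hl₁, rfl⟩
    obtain ⟨bs, hbs, hc⟩ := hcfg l₁ hl₁
    exact (hmin bs hbs).trans hc
  exact ⟨⟨bs₀, hbs₀, hc₀⟩, ⟨m, hm, hdist.symm⟩, fun bs hbs => hdist.trans_le (hmin bs hbs),
    l', m, hl', hcost.trans hdist.symm, hm, hperm⟩
end

section
/- Let (X, d) be a metric space, R ⊆ X a finite set, and let y assign a nonnegative real y_S to every subset S ⊆ R, with y_S = 0 whenever |S| is even. Let v_0, v_1, …, v_k be points of R forming a path such that: (i) every edge of the path is tight, i.e., for each i ∈ {1, …, k}, d(v_{i−1}, v_i) = Σ_{S ⊆ R : |S ∩ {v_{i−1}, v_i}| = 1} y_S; and (ii) for every S ⊆ R, the number of indices i with |S ∩ {v_{i−1}, v_i}| = 1 is at most 2. Then d(v_0, v_k) ≤ 2 · Σ_{S ⊆ R, |S| odd} y_S. -/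
/-!
By the triangle inequality the distance between the endpoints is at most the length of the path.
Tightness turns each edge length into a sum of dual values, and exchanging the two sums counts
`y S` once for each path edge crossing the cut of `S`, hence at most twice.  Sets of even
cardinality contribute nothing, so the total is at most twice the sum over odd sets.
-/

theorem dist_zero_last_le_sum {X : Type*} [PseudoMetricSpace X] :
    ∀ (k : ℕ) (v : Fin (k + 1) → X),
      dist (v 0) (v (Fin.last k)) ≤ ∑ i : Fin k, dist (v i.castSucc) (v i.succ)
  | 0, v => by simp
  | k + 1, v => by
    rw [Fin.sum_univ_castSucc]
    have ih := dist_zero_last_le_sum k (fun i => v i.castSucc)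
    have tri := dist_triangle (v 0) (v (Fin.last k).castSucc) (v (Fin.last (k + 1)))
    simp only [Fin.castSucc_zero, Fin.succ_castSucc, Fin.succ_last] at ih ⊢
    linarith

/-- **Bounding the length of a tight path by the dual value.** Let `(X, d)` be
a metric space, `R ⊆ X` finite, and let `y` assign a nonnegative real to each
subset `S ⊆ R`, vanishing on sets of even cardinality.  Let `v 0, …, v k` be
points of `R` forming a path such that (i) every edge of the path is tight:
`d(v (i-1), v i) = ∑_{S ⊆ R, |S ∩ {v (i-1), v i}| = 1} y S`, and (ii) each
`S ⊆ R` is crossed by at most two edges of the path.  Then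
`d(v 0, v k) ≤ 2 · ∑_{S ⊆ R, |S| odd} y S`. -/
theorem tight_path_bounded_by_dual {X : Type*} [MetricSpace X] [DecidableEq X]
    (R : Finset X) (y : Finset X → ℝ)
    (hy_nonneg : ∀ S, 0 ≤ y S)
    (hy_even : ∀ S, Even S.card → y S = 0)
    (k : ℕ) (v : Fin (k + 1) → X) (hv : ∀ i, v i ∈ R)
    (htight : ∀ i : Fin k,
      dist (v i.castSucc) (v i.succ) =
        ∑ S ∈ R.powerset.filter
            (fun S => (S ∩ {v i.castSucc, v i.succ}).card = 1), y S)
    (hcross : ∀ S ∈ R.powerset,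
      (Finset.univ.filter
        (fun i : Fin k => (S ∩ {v i.castSucc, v i.succ}).card = 1)).card ≤ 2) :
    dist (v 0) (v (Fin.last k)) ≤
      2 * ∑ S ∈ R.powerset.filter (fun S => Odd S.card), y S := by
  calc dist (v 0) (v (Fin.last k))
      ≤ ∑ i : Fin k, dist (v i.castSucc) (v i.succ) := dist_zero_last_le_sum k v
    _ = ∑ S ∈ R.powerset, ∑ i : Fin k,
          if (S ∩ {v i.castSucc, v i.succ}).card = 1 then y S else 0 := by
        simp_rw [htight, Finset.sum_filter]
        exact Finset.sum_comm
    _ ≤ ∑ S ∈ R.powerset, 2 * (if Odd S.card then y S else 0) := by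
        refine Finset.sum_le_sum fun S hS => ?_
        rw [← Finset.sum_filter, Finset.sum_const, nsmul_eq_mul]
        split_ifs with hodd
        · exact mul_le_mul_of_nonneg_right (by exact_mod_cast hcross S hS) (hy_nonneg S)
        · simp [hy_even S (Nat.not_odd_iff_even.mp hodd)]
    _ = 2 * ∑ S ∈ R.powerset.filter (fun S => Odd S.card), y S := by
        rw [← Finset.mul_sum, Finset.sum_filter]
end
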